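/- Let g_1, g_2 be binary morphisms on X = {a,b} with g_1(a) = a^s, g_1(b) = a^{γ_1} b a^{α_1} ⋯ b a^{α_{p-1}} b a^{γ_2}, g_2(a) = a^t, g_2(b) = a^{δ_1} b a^{β_1} ⋯ b a^{β_{q-1}} b a^{δ_2}, where s,t ≥ 1, p,q ≥ 2 and all exponents are nonnegative. Assume p and q are multiplicatively independent. Then g_1 g_2 = g_2 g_1 if and only if either (i) g_1(b) and g_2(b) are both powers of b, or (ii) g_1(a) = g_2(a) = a, g_1(b) = (b a^α)^{p-1} b and g_2(b) = (b a^α)^{q-1} b for some common α ≥ 0. -/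

import Mathlib

/-- Words over the binary alphabet: `false` is the letter `a`, `true` is the letter `b`. -/
abbrev Word := List Bool

/-- The morphism of the free monoid determined by the images `g` of the letters. -/
def applyG (g : Bool → Word) (w : Word) : Word := w.flatMap g

/-- `a^n`. -/
def rep (n : ℕ) : Word := List.replicate n false

/-- `b a^{α 1} b a^{α 2} ⋯ b a^{α (p-1)} b`, a word with `p` occurrences of `b`. -/
def blockWord (p : ℕ) (α : ℕ → ℕ) : Word :=
  ((List.range (p - 1)).flatMap fun i => true :: rep (α (i + 1))) ++ [true]

/-- `w^k`. -/
def wordPow (w : Word) (k : ℕ) : Word := (List.replicate k w).flatten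

/-- `u` and `v` are `a`-conjugates. -/
def AConj (u v : Word) : Prop :=
  ∃ p q r s : ℕ, ∃ w : Word,
    u = rep p ++ w ++ rep q ∧ v = rep r ++ w ++ rep s ∧ p + q = r + s

/-- `w` is the infinite word `ω(g)`: for every `n`, the word obtained from `g^n(b)` by deleting
all occurrences of `a` preceding the first occurrence of `b` is a prefix of `w`. -/
def IsOmega (g : Bool → Word) (w : ℕ → Bool) : Prop :=
  ∀ n k : ℕ, ∀ hk : k < (((applyG g)^[n] [true]).dropWhile (fun x => !x)).length,
    (((applyG g)^[n] [true]).dropWhile (fun x => !x)).get ⟨k, hk⟩ = w k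

/-- `Aw w i` (for `i ≥ 1`): the number of occurrences of `a` in `w` strictly between the
`i`-th and `(i+1)`-th occurrences of `b` in `w`. -/
noncomputable def Aw (w : ℕ → Bool) (i : ℕ) : ℕ :=
  Nat.nth (fun n => w n = true) i - Nat.nth (fun n => w n = true) (i - 1) - 1

/-!
Encode a word by its gaps, the lengths of its maximal blocks of `a`. A morphism `g` with
`g(a) = a^s` and `p` letters `b` in `g(b)` sends a gap sequence `X` to the sequence whose gap at a
multiple `p m` is `c + s X(m)`, where `c` counts the leading and trailing letters `a` of `g(b)`, and
whose other gaps are copied periodically from `g(b)`. If `p ≥ 2`, this map has exactly one fixed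
sequence `A`, so any commuting morphism fixes `A` as well. Hence `A` is self-similar at both scales
`p` and `q`, thus also at all scales `p^k` and `q^l`. Multiplicative independence gives such scales
`P < Q` with `P ∤ Q`; the Chinese remainder theorem and a descent `m ↦ P m / Q` then show that `A`
is a constant `x`. Finally `x = c + s x` forces `c = 0`, and `s = 1` unless `x = 0`.
-/

section MultiplicativeIndependence

/-- Multiplicative independence of `p` and `q`: no power of `p` is a power of `q`, apart from the
zeroth powers. -/
def MultiplicativelyIndependent (p q : ℕ) : Prop :=
  ∀ i j : ℕ, p ^ i = q ^ j → i = 0 ∧ j = 0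

-- Otherwise `q ^ l` is always a multiple of the largest power of `p` below it; the quotient is less
-- than `p`, so two values of `l` share it, and dividing gives a relation between `p` and `q`.
theorem MultiplicativelyIndependent.exists_pow_lt_pow_not_dvd {p q : ℕ} (hp : 1 < p) (hq : 0 < q)
    (hpq : MultiplicativelyIndependent p q) : ∃ k l : ℕ, p ^ k < q ^ l ∧ ¬ p ^ k ∣ q ^ l := by
  by_contra! hdvd
  have hlog_dvd (l : ℕ) : p ^ Nat.log p (q ^ l) ∣ q ^ l := by
    rcases (Nat.pow_log_le_self p (pow_pos hq l).ne').lt_or_eq with hlt | heq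
    · exact hdvd _ _ hlt
    · exact heq.dvd
  have hquot (l : ℕ) : q ^ l / p ^ Nat.log p (q ^ l) < p :=
    Nat.div_lt_of_lt_mul (Nat.lt_pow_succ_log_self hp _)
  obtain ⟨l, l', hne, heq⟩ :=
    Finite.exists_ne_map_eq_of_infinite fun l => (⟨_, hquot l⟩ : Fin p)
  wlog hlt : l < l' generalizing l l'
  · exact this l' l hne.symm heq.symm (by omega)
  have hlog : Nat.log p (q ^ l) ≤ Nat.log p (q ^ l') :=
    Nat.log_mono_right (Nat.pow_le_pow_right hq hlt.le)
  obtain ⟨i, hi⟩ := Nat.exists_eq_add_of_le hlog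
  obtain ⟨j, rfl⟩ := Nat.exists_eq_add_of_le hlt.le
  have hrel : q ^ l * p ^ Nat.log p (q ^ (l + j)) = q ^ (l + j) * p ^ Nat.log p (q ^ l) := by
    have h₁ := Nat.div_mul_cancel (hlog_dvd l)
    have h₂ := Nat.div_mul_cancel (hlog_dvd (l + j))
    rw [← Fin.mk.inj heq] at h₂
    calc q ^ l * p ^ Nat.log p (q ^ (l + j))
        = q ^ l / p ^ Nat.log p (q ^ l) * p ^ Nat.log p (q ^ (l + j)) * p ^ Nat.log p (q ^ l) := by
          nth_rw 1 [← h₁]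
          ring
      _ = q ^ (l + j) * p ^ Nat.log p (q ^ l) := by rw [h₂]
  have hpow : p ^ i = q ^ j := by
    have hpos : 0 < q ^ l * p ^ Nat.log p (q ^ l) := by positivity
    apply Nat.eq_of_mul_eq_mul_left hpos
    rw [hi, pow_add, pow_add] at hrel
    linarith
  have := (hpq i j hpow).2
  omega

end MultiplicativeIndependence

section SelfSimilar

/-- A sequence `A`, indexed from `1` (the value `A 0` is irrelevant), is self-similar at scale `p`
if it is the affine image `c + s * A m` of itself along the multiples `p * m` and is periodic
modulo `p` elsewhere. -/
structure IsSelfSimilar (p s c : ℕ) (A : ℕ → ℕ) : Prop where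
  apply_mul : ∀ m, 0 < m → A (p * m) = c + s * A m
  apply_congr : ∀ x y, ¬ p ∣ x → x ≡ y [MOD p] → A x = A y

namespace IsSelfSimilar

variable {p q s t c d : ℕ} {A : ℕ → ℕ}

theorem mul (hp : 0 < p) (hq : 0 < q) (hA : IsSelfSimilar p s c A) (hB : IsSelfSimilar q t d A) :
    IsSelfSimilar (p * q) (s * t) (c + s * d) A where
  apply_mul m hm := by
    rw [mul_assoc, hA.apply_mul _ (by positivity), hB.apply_mul m hm]
    ring
  apply_congr x y hx hxy := by
    by_cases hpx : p ∣ x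
    · obtain ⟨x, rfl⟩ := hpx
      obtain ⟨y, rfl⟩ := ((hxy.of_mul_right q).dvd_iff dvd_rfl).1 (dvd_mul_right p x)
      have hqx : ¬ q ∣ x := fun h => hx (Nat.mul_dvd_mul_left p h)
      have hxy' : x ≡ y [MOD q] := hxy.mul_left_cancel' hp.ne'
      have hqy : ¬ q ∣ y := (hxy'.dvd_iff dvd_rfl).not.1 hqx
      have pos_of_not_dvd {z : ℕ} (hz : ¬ q ∣ z) : 0 < z :=
        Nat.pos_of_ne_zero fun h => hz (h ▸ dvd_zero q)
      rw [hA.apply_mul x (pos_of_not_dvd hqx), hA.apply_mul y (pos_of_not_dvd hqy),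
        hB.apply_congr x y hqx hxy']
    · exact hA.apply_congr x y hpx (hxy.of_mul_right q)

theorem pow (hp : 0 < p) (hA : IsSelfSimilar p s c A) (k : ℕ) :
    ∃ c', IsSelfSimilar (p ^ k) (s ^ k) c' A := by
  induction k with
  | zero => exact ⟨0, by simp, fun x _ hx => absurd (by simp) hx⟩
  | succ k ih =>
    obtain ⟨c', hA'⟩ := ih
    rw [pow_succ', pow_succ']
    exact ⟨_, hA.mul hp (pow_pos hp k) hA'⟩

theorem apply_eq_of_modEq_gcd (hA : IsSelfSimilar p s c A) (hB : IsSelfSimilar q t d A) {x y : ℕ}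
    (hx : ¬ p ∣ x) (hy : ¬ q ∣ y) (hxy : x ≡ y [MOD Nat.gcd p q]) : A x = A y := by
  obtain ⟨z, hzx, hzy⟩ := Nat.chineseRemainder' hxy
  rw [hA.apply_congr x z hx hzx.symm, hB.apply_congr y z hy hzy.symm]

theorem apply_eq_apply_one_of_lt (hs : 0 < s) (hp : 0 < p) (hpq : p < q) (hdvd : ¬ p ∣ q)
    (hA : IsSelfSimilar p s c A) (hB : IsSelfSimilar q t d A) :
    ∀ m, 0 < m → A m = A 1 := by
  have apply_of_dvd (y : ℕ) (hpy : p ∣ y) (hqy : ¬ q ∣ y) : A y = A q := by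
    refine (hA.apply_eq_of_modEq_gcd hB hdvd hqy ?_).symm
    exact ((Nat.modEq_zero_iff_dvd.2 (Nat.gcd_dvd_right p q)).trans
      (Nat.modEq_zero_iff_dvd.2 ((Nat.gcd_dvd_left p q).trans hpy)).symm)
  intro m
  induction m using Nat.strong_induction_on with
  | _ m ih =>
  intro hm
  have apply_mul_eq : A (p * m) = A q := by
    by_cases hd : q ∣ p * m
    · obtain ⟨m', hm'⟩ := hd
      have hpos : 0 < m' := Nat.pos_of_mul_pos_left (a := q) (hm' ▸ Nat.mul_pos hp hm)
      have hlt : m' < m := by nlinarith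
      rw [hm', hB.apply_mul m' hpos, ih m' hlt hpos, ← hB.apply_mul 1 one_pos, mul_one]
    · exact apply_of_dvd _ (dvd_mul_right p m) hd
  have apply_mul_one_eq : A (p * 1) = A q :=
    apply_of_dvd _ (dvd_mul_right p 1) (by simpa using Nat.not_dvd_of_pos_of_lt hp hpq)
  rw [hA.apply_mul m hm] at apply_mul_eq
  rw [hA.apply_mul _ one_pos] at apply_mul_one_eq
  exact Nat.eq_of_mul_eq_mul_left hs (by omega)

theorem apply_eq_apply_one (hs : 0 < s) (hp : 1 < p) (hq : 0 < q)
    (hpq : MultiplicativelyIndependent p q) (hA : IsSelfSimilar p s c A)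
    (hB : IsSelfSimilar q t d A) : ∀ m, 0 < m → A m = A 1 := by
  obtain ⟨k, l, hlt, hdvd⟩ := hpq.exists_pow_lt_pow_not_dvd hp hq
  obtain ⟨c', hA'⟩ := hA.pow (by omega) k
  obtain ⟨d', hB'⟩ := hB.pow hq l
  exact apply_eq_apply_one_of_lt (pow_pos hs k) (by positivity) hlt hdvd hA' hB'

end IsSelfSimilar

end SelfSimilar

section CausalMap

variable {α : Type*} {T : (ℕ → α) → ℕ → α}

theorem exists_isFixedPt_of_causal [Inhabited α]
    (hT : ∀ X Y n, (∀ m < n, X m = Y m) → T X n = T Y n) : ∃ A, Function.IsFixedPt T A := by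
  let step (n : ℕ) (A : ∀ m, m < n → α) : α := T (fun m => if h : m < n then A m h else default) n
  refine ⟨WellFoundedLT.fix step, funext fun n => ?_⟩
  rw [WellFoundedLT.fix_eq]
  exact hT _ _ n fun m hm => by simp [hm]

theorem isFixedPt_eq_of_causal (hT : ∀ X Y n, (∀ m < n, X m = Y m) → T X n = T Y n)
    {A B : ℕ → α} (hA : Function.IsFixedPt T A) (hB : Function.IsFixedPt T B) : A = B := by
  funext n
  induction n using Nat.strong_induction_on with
  | _ n ih => rw [← hA, ← hB, hT A B n ih]

end CausalMap

section Gap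

/-- `gap w n` is the number of letters `a` of the finite word `w` between its `n`-th and
`(n + 1)`-st letters `b`, counted from `1`. Thus `gap w 0` is the number of leading letters `a`,
`gap w (w.count true)` the number of trailing ones, and all later values are `0`. -/
def gap : Word → ℕ → ℕ
  | [], _ => 0
  | false :: w, 0 => gap w 0 + 1
  | false :: w, n + 1 => gap w (n + 1)
  | true :: _, 0 => 0
  | true :: w, n + 1 => gap w n

theorem gap_append (u v : Word) (n : ℕ) :
    gap (u ++ v) n =
      gap u n + if u.count true ≤ n then gap v (n - u.count true) else 0 := by
  induction u generalizing n with
  | nil => simp [gap]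
  | cons x u ih => cases x <;> cases n <;> simp [gap, ih, add_right_comm]

theorem gap_eq_zero_of_count_lt {w : Word} {n : ℕ} (h : w.count true < n) : gap w n = 0 := by
  induction w generalizing n with
  | nil => rfl
  | cons x w ih => cases x <;> cases n <;> simp_all [gap]

theorem count_true_rep (k : ℕ) : (rep k).count true = 0 := by
  simp [rep, List.count_replicate]

theorem gap_rep (k n : ℕ) : gap (rep k) n = if n = 0 then k else 0 := by
  rcases n with _ | n
  · induction k with
    | zero => rfl
    | succ k ih => simpa [rep, List.replicate_succ, gap] using ih
  · exact gap_eq_zero_of_count_lt (by simp [count_true_rep])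

theorem eq_of_gap_eq {u v : Word} (hcount : u.count true = v.count true)
    (hgap : ∀ n ≤ u.count true, gap u n = gap v n) : u = v := by
  induction u generalizing v with
  | nil =>
    rcases v with _ | ⟨_ | _, v⟩
    · rfl
    · simpa [gap] using hgap 0 le_rfl
    · simp at hcount
  | cons x u ih =>
    rcases x with _ | _ <;> rcases v with _ | ⟨_ | _, v⟩
    · simpa [gap] using hgap 0 (Nat.zero_le _)
    · rw [ih (by simpa using hcount) fun n hn => ?_]
      cases n with
      | zero => simpa [gap] using hgap 0 (Nat.zero_le _)
      | succ n => simpa [gap] using hgap (n + 1) (by simpa using hn)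
    · simpa [gap] using hgap 0 (Nat.zero_le _)
    · simp at hcount
    · simpa [gap] using hgap 0 (Nat.zero_le _)
    · rw [ih (by simpa using hcount) fun n hn => ?_]
      simpa [gap] using hgap (n + 1) (by simpa using hn)

theorem blockWord_succ_succ (n : ℕ) (α : ℕ → ℕ) :
    blockWord (n + 2) α = blockWord (n + 1) α ++ rep (α (n + 1)) ++ [true] := by
  simp [blockWord, List.range_succ]

theorem count_true_blockWord {n : ℕ} (hn : 0 < n) (α : ℕ → ℕ) :
    (blockWord n α).count true = n := by
  induction n, hn using Nat.le_induction with
  | base => simp [blockWord]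
  | succ n hn ih =>
    obtain ⟨n, rfl⟩ := Nat.exists_eq_add_of_le' hn
    simp [blockWord_succ_succ, ih, count_true_rep]

theorem gap_blockWord {n : ℕ} (hn : 0 < n) (α : ℕ → ℕ) (r : ℕ) :
    gap (blockWord n α) r = if 0 < r ∧ r < n then α r else 0 := by
  induction n, hn using Nat.le_induction with
  | base => rcases r with _ | r <;> simp [blockWord, gap]
  | succ n hn ih =>
    obtain ⟨n, rfl⟩ := Nat.exists_eq_add_of_le' hn
    have gap_singleton (k : ℕ) : gap [true] k = 0 := by cases k <;> rfl
    rw [blockWord_succ_succ, gap_append, gap_singleton, ite_self, add_zero, gap_append, ih,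
      count_true_blockWord hn, gap_rep]
    rcases lt_trichotomy r (n + 1) with h | rfl | h
    · simp [h, h.not_ge, h.trans (Nat.lt_succ_self _)]
    · simp
    · simp [h.le, h.not_gt, show r - (n + 1) ≠ 0 by omega, show ¬ r < n + 1 + 1 by omega]

theorem eq_blockWord_const {u : Word} {x : ℕ} (hu : 0 < u.count true) (hfirst : gap u 0 = 0)
    (hlast : gap u (u.count true) = 0)
    (hinner : ∀ n, 0 < n → n < u.count true → gap u n = x) :
    u = blockWord (u.count true) (fun _ => x) := by
  refine eq_of_gap_eq (count_true_blockWord hu _).symm fun n hn => ?_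
  rw [gap_blockWord hu]
  split_ifs with h
  · exact hinner n h.1 h.2
  · obtain rfl | rfl : n = 0 ∨ n = u.count true := by omega
    · exact hfirst
    · exact hlast

end Gap

theorem applyG_cons (g : Bool → Word) (x : Bool) (w : Word) :
    applyG g (x :: w) = g x ++ applyG g w :=
  List.flatMap_cons

theorem applyG_singleton (g : Bool → Word) (x : Bool) : applyG g [x] = g x := by
  simp [applyG]

theorem applyG_append (g : Bool → Word) (u v : Word) :
    applyG g (u ++ v) = applyG g u ++ applyG g v :=
  List.flatMap_append

section GapMap

/-- The effect on the gap sequences of infinite words of the morphism `a ↦ a^s`, `b ↦ u`. As only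
the gaps following the first `b` matter, the value at `0` is set to `0`. -/
def gapMap (s : ℕ) (u : Word) (X : ℕ → ℕ) (n : ℕ) : ℕ :=
  if n = 0 then 0
  else if u.count true ∣ n then gap u 0 + gap u (u.count true) + s * X (n / u.count true)
  else gap u (n % u.count true)

theorem gapMap_congr {s : ℕ} {u : Word} (hu : 1 < u.count true) {X Y : ℕ → ℕ} {n : ℕ}
    (h : ∀ m, 0 < m → m < n → X m = Y m) : gapMap s u X n = gapMap s u Y n := by
  unfold gapMap
  split_ifs with hn hd
  · rfl
  · have hn' : 0 < n := Nat.pos_of_ne_zero hn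
    rw [h _ (Nat.div_pos (Nat.le_of_dvd hn' hd) (by omega)) (Nat.div_lt_self hn' hu)]
  · rfl

theorem gapMap_cons_false (s : ℕ) (u w : Word) (n : ℕ) :
    gapMap s u (gap (false :: w)) n = gapMap s u (gap w) n := by
  unfold gapMap
  split_ifs with hn hd
  · rfl
  · have hquot : n / u.count true ≠ 0 :=
      (Nat.div_ne_zero_iff_of_dvd hd).2 ⟨hn, ne_zero_of_dvd_ne_zero hn hd⟩
    obtain ⟨m, hm⟩ := Nat.exists_eq_succ_of_ne_zero hquot
    rw [hm, gap]
  · rfl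

theorem gapMap_cons_true_add {s : ℕ} {u : Word} (hu : 0 < u.count true) (w : Word) {n : ℕ}
    (hn : 0 < n) : gapMap s u (gap (true :: w)) (u.count true + n) = gapMap s u (gap w) n := by
  simp [gapMap, hn.ne', hu.ne', Nat.add_div_left _ hu, gap]

variable {g h : Bool → Word} {s t : ℕ}

theorem count_true_applyG (ha : g false = rep s) (w : Word) :
    (applyG g w).count true = (g true).count true * w.count true := by
  induction w with
  | nil => simp [applyG]
  | cons x w ih =>
    cases x with
    | false => simp [applyG_cons, ih, ha, count_true_rep]
    | true => simp [applyG_cons, ih, mul_add_one, add_comm]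

theorem gap_applyG_zero (ha : g false = rep s) (hb : 0 < (g true).count true) {w : Word}
    (hw : 0 < w.count true) : gap (applyG g w) 0 = gap (g true) 0 + s * gap w 0 := by
  induction w with
  | nil => simp at hw
  | cons x w ih =>
    cases x with
    | false =>
      simp only [applyG_cons, gap_append, ha, gap_rep, count_true_rep, gap]
      simp [ih (by simpa using hw)]
      ring
    | true => simp [applyG_cons, gap_append, gap, hb.ne']

theorem gap_applyG (ha : g false = rep s) (hb : 0 < (g true).count true) {w : Word} {n : ℕ}
    (hn : 0 < n) (hlt : n < (g true).count true * w.count true) :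
    gap (applyG g w) n = gapMap s (g true) (gap w) n := by
  induction w generalizing n with
  | nil => simp at hlt
  | cons x w ih =>
    rw [applyG_cons, gap_append]
    cases x with
    | false =>
      rw [gapMap_cons_false, ← ih hn (by simpa using hlt), ha, gap_rep, count_true_rep]
      simp [hn.ne']
    | true =>
      rw [List.count_cons_self, mul_add_one] at hlt
      rcases lt_trichotomy n ((g true).count true) with h | rfl | h
      · simp [gapMap, hn.ne', h.not_ge, Nat.not_dvd_of_pos_of_lt hn h, Nat.mod_eq_of_lt h]
      · have hw : 0 < w.count true := Nat.pos_of_mul_pos_left (a := (g true).count true) (by omega)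
        simp [gapMap, hb.ne', gap_applyG_zero ha hb hw, Nat.div_self hb, gap]
        ring
      · obtain ⟨k, rfl⟩ := Nat.exists_eq_add_of_lt h
        rw [add_assoc, gapMap_cons_true_add hb w k.succ_pos, ← ih k.succ_pos (by omega),
          gap_eq_zero_of_count_lt (by omega)]
        simp

-- `blockWord (n + 1) X` is a word whose inner gaps start with `X 1, …, X n`, so commutation of the
-- gap maps at `n` is read off from commutation of the morphisms on this word.
theorem gapMap_commute (hga : g false = rep s) (hgb : 1 < (g true).count true)
    (hha : h false = rep t) (hhb : 1 < (h true).count true)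
    (hcomm : applyG g ∘ applyG h = applyG h ∘ applyG g) :
    Function.Commute (gapMap s (g true)) (gapMap t (h true)) := by
  have gap_comp {g h : Bool → Word} {s t : ℕ} (hga : g false = rep s)
      (hgb : 1 < (g true).count true) (hha : h false = rep t) (hhb : 1 < (h true).count true)
      (X : ℕ → ℕ) {n : ℕ} (hn : 0 < n) :
      gap (applyG g (applyG h (blockWord (n + 1) X))) n =
        gapMap s (g true) (gapMap t (h true) X) n := by
    have hcount := count_true_blockWord n.succ_pos X
    rw [gap_applyG hga (by omega) hn]
    · refine gapMap_congr hgb fun m hm hmn => ?_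
      rw [gap_applyG hha (by omega) hm (by rw [hcount]; nlinarith)]
      refine gapMap_congr hhb fun r hr hrm => ?_
      rw [gap_blockWord n.succ_pos, if_pos ⟨hr, by omega⟩]
    · rw [count_true_applyG hha, hcount]
      nlinarith [Nat.mul_le_mul hgb.le hhb.le]
  intro X
  funext n
  rcases Nat.eq_zero_or_pos n with rfl | hn
  · simp [gapMap]
  · rw [← gap_comp hga hgb hha hhb X hn, ← gap_comp hha hhb hga hgb X hn]
    exact congrArg (gap · n) (congrFun hcomm _)

variable {u : Word} {A : ℕ → ℕ}

theorem isSelfSimilar_of_isFixedPt_gapMap (hu : 0 < u.count true)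
    (hA : Function.IsFixedPt (gapMap s u) A) :
    IsSelfSimilar (u.count true) s (gap u 0 + gap u (u.count true)) A where
  apply_mul m hm := by
    rw [← congrFun hA]
    simp [gapMap, hm.ne', hu.ne', Nat.mul_div_cancel_left m hu]
  apply_congr x y hx hxy := by
    have apply_eq {z : ℕ} (hz : ¬ u.count true ∣ z) : A z = gap u (z % u.count true) := by
      have hz0 : z ≠ 0 := by
        rintro rfl
        exact hz (dvd_zero _)
      rw [← congrFun hA, gapMap, if_neg hz0, if_neg hz]
    rw [apply_eq hx, apply_eq ((hxy.dvd_iff dvd_rfl).not.1 hx), hxy]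

theorem apply_eq_gap_of_isFixedPt_gapMap (hA : Function.IsFixedPt (gapMap s u) A) {r : ℕ}
    (hr : 0 < r) (hru : r < u.count true) : A r = gap u r := by
  rw [← congrFun hA, gapMap, if_neg hr.ne', if_neg (Nat.not_dvd_of_pos_of_lt hr hru),
    Nat.mod_eq_of_lt hru]

theorem eq_blockWord_of_isFixedPt_gapMap (hs : 0 < s) (hu : 0 < u.count true)
    (hA : Function.IsFixedPt (gapMap s u) A) (hconst : ∀ m, 0 < m → A m = A 1) :
    u = blockWord (u.count true) (fun _ => A 1) ∧ s * A 1 = A 1 := by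
  have hfix : A 1 = gap u 0 + gap u (u.count true) + s * A 1 := by
    rw [← (isSelfSimilar_of_isFixedPt_gapMap hu hA).apply_mul 1 one_pos, mul_one, hconst _ hu]
  have hle : A 1 ≤ s * A 1 := Nat.le_mul_of_pos_left _ hs
  refine ⟨eq_blockWord_const hu (by omega) (by omega) fun r hr hru => ?_, by omega⟩
  rw [← apply_eq_gap_of_isFixedPt_gapMap hA hr hru, hconst r hr]

theorem exists_eq_blockWord_of_commute (hs : 0 < s) (ht : 0 < t) (hga : g false = rep s)
    (hgb : 1 < (g true).count true) (hha : h false = rep t) (hhb : 1 < (h true).count true)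
    (hind : MultiplicativelyIndependent ((g true).count true) ((h true).count true))
    (hcomm : applyG g ∘ applyG h = applyG h ∘ applyG g) :
    ∃ x, (g true = blockWord ((g true).count true) (fun _ => x) ∧ s * x = x) ∧
      (h true = blockWord ((h true).count true) (fun _ => x) ∧ t * x = x) := by
  have hcausal (X Y : ℕ → ℕ) (n : ℕ) (hXY : ∀ m < n, X m = Y m) :
      gapMap s (g true) X n = gapMap s (g true) Y n :=
    gapMap_congr hgb fun m _ hm => hXY m hm
  obtain ⟨A, hAg⟩ := exists_isFixedPt_of_causal hcausal
  have hAh : Function.IsFixedPt (gapMap t (h true)) A :=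
    isFixedPt_eq_of_causal hcausal
      (hAg.map (gapMap_commute hga hgb hha hhb hcomm).symm) hAg
  have hconst : ∀ m, 0 < m → A m = A 1 :=
    IsSelfSimilar.apply_eq_apply_one hs hgb (by omega) hind
      (isSelfSimilar_of_isFixedPt_gapMap (by omega) hAg)
      (isSelfSimilar_of_isFixedPt_gapMap (by omega) hAh)
  exact ⟨A 1, eq_blockWord_of_isFixedPt_gapMap hs (by omega) hAg hconst,
    eq_blockWord_of_isFixedPt_gapMap ht (by omega) hAh hconst⟩

end GapMap

section Commute

theorem wordPow_succ (w : Word) (n : ℕ) : wordPow w (n + 1) = w ++ wordPow w n := by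
  simp [wordPow, List.replicate_succ]

theorem wordPow_add (w : Word) (m n : ℕ) : wordPow w (m + n) = wordPow w m ++ wordPow w n := by
  simp only [wordPow, ← List.flatten_append, List.replicate_append_replicate]

theorem wordPow_mul (w : Word) (m n : ℕ) : wordPow w (m * n) = wordPow (wordPow w m) n := by
  induction n with
  | zero => rfl
  | succ n ih => rw [mul_add_one, add_comm, wordPow_add, ih, wordPow_succ]

theorem wordPow_singleton (x : Bool) (n : ℕ) : wordPow [x] n = List.replicate n x := by
  simp [wordPow]

theorem blockWord_const_append_rep {n : ℕ} (hn : 0 < n) (c : ℕ) :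
    blockWord n (fun _ => c) ++ rep c = wordPow (true :: rep c) n := by
  induction n, hn using Nat.le_induction with
  | base => simp [blockWord, wordPow]
  | succ n hn ih =>
    obtain ⟨n, rfl⟩ := Nat.exists_eq_add_of_le' hn
    rw [blockWord_succ_succ, ih, wordPow_add _ (n + 1) 1]
    simp [wordPow]

theorem blockWord_const_zero {n : ℕ} (hn : 0 < n) :
    blockWord n (fun _ => 0) = List.replicate n true := by
  rw [← wordPow_singleton]
  simpa [rep] using blockWord_const_append_rep hn 0

variable {g h : Bool → Word}

theorem applyG_wordPow (g : Bool → Word) (w : Word) (n : ℕ) :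
    applyG g (wordPow w n) = wordPow (applyG g w) n := by
  induction n with
  | zero => rfl
  | succ n ih => rw [wordPow_succ, applyG_append, ih, wordPow_succ]

theorem applyG_comm_of_eq_wordPow {z : Word} {m n : ℕ} (hg : applyG g z = wordPow z m)
    (hh : applyG h z = wordPow z n) : applyG g (applyG h z) = applyG h (applyG g z) := by
  rw [hh, hg, applyG_wordPow, applyG_wordPow, hg, hh, ← wordPow_mul, ← wordPow_mul, mul_comm]

theorem applyG_comp_comm_of_letters (hcomm : ∀ x, applyG g (h x) = applyG h (g x)) :
    applyG g ∘ applyG h = applyG h ∘ applyG g := by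
  funext w
  induction w with
  | nil => rfl
  | cons x w ih =>
    simp only [Function.comp_apply] at ih ⊢
    rw [applyG_cons, applyG_cons, applyG_append, applyG_append, ih, hcomm]

-- `gh` and `hg` agree on `a` and on `b a^c`, so cancelling the image of `a^c` they agree on `b`.
theorem applyG_comp_comm_of_eq_wordPow {s t c m n : ℕ} (hga : g false = rep s)
    (hha : h false = rep t) (hg : applyG g (true :: rep c) = wordPow (true :: rep c) m)
    (hh : applyG h (true :: rep c) = wordPow (true :: rep c) n) :
    applyG g ∘ applyG h = applyG h ∘ applyG g := by
  have rep_eq (k : ℕ) : rep k = wordPow [false] k := (wordPow_singleton false k).symm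
  have hfalse : applyG g (h false) = applyG h (g false) := by
    rw [← applyG_singleton g, ← applyG_singleton h]
    exact applyG_comm_of_eq_wordPow ((applyG_singleton g _).trans (hga.trans (rep_eq s)))
      ((applyG_singleton h _).trans (hha.trans (rep_eq t)))
  have hrep : applyG g (applyG h (rep c)) = applyG h (applyG g (rep c)) := by
    simp only [rep_eq c, applyG_wordPow, applyG_singleton, hfalse]
  have htrue : applyG g (h true) = applyG h (g true) := by
    have hz := applyG_comm_of_eq_wordPow hg hh
    rw [applyG_cons, applyG_cons, applyG_append, applyG_append, hrep] at hz
    exact List.append_cancel_right hz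
  exact applyG_comp_comm_of_letters (Bool.forall_bool.2 ⟨hfalse, htrue⟩)

theorem applyG_true_cons_rep_eq_wordPow {n c : ℕ} (hn : 0 < n) (ha : g false = [false])
    (hb : g true = blockWord n (fun _ => c)) :
    applyG g (true :: rep c) = wordPow (true :: rep c) n := by
  have hrep : applyG g (rep c) = rep c := by
    rw [rep, ← wordPow_singleton, applyG_wordPow, applyG_singleton, ha]
  rw [applyG_cons, hrep, hb, blockWord_const_append_rep hn]

end Commute

/-- for `p`, `q` multiplicatively independent, `g₁g₂ = g₂g₁` iff (i) both
`g₁(b)` and `g₂(b)` are powers of `b`, or (ii) `g₁(a)=g₂(a)=a`, `g₁(b)=(ba^α)^{p-1}b`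
and `g₂(b)=(ba^α)^{q-1}b` for a common `α`. -/
theorem stmt11 (s t : ℕ) (hs : 1 ≤ s) (ht : 1 ≤ t)
    (p q : ℕ) (hp : 2 ≤ p) (hq : 2 ≤ q)
    (γ₁ γ₂ δ₁ δ₂ : ℕ) (α β : ℕ → ℕ)
    (g₁ g₂ : Bool → Word)
    (h₁a : g₁ false = rep s)
    (h₁b : g₁ true = rep γ₁ ++ blockWord p α ++ rep γ₂)
    (h₂a : g₂ false = rep t)
    (h₂b : g₂ true = rep δ₁ ++ blockWord q β ++ rep δ₂)
    (hind : ∀ i j : ℕ, p ^ i = q ^ j → i = 0 ∧ j = 0) :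
    applyG g₁ ∘ applyG g₂ = applyG g₂ ∘ applyG g₁ ↔
      ((∃ k : ℕ, g₁ true = List.replicate k true) ∧
        (∃ k : ℕ, g₂ true = List.replicate k true)) ∨
      (g₁ false = [false] ∧ g₂ false = [false] ∧
        ∃ α₀ : ℕ, g₁ true = blockWord p (fun _ => α₀) ∧
          g₂ true = blockWord q (fun _ => α₀)) := by
  have hgb : (g₁ true).count true = p := by
    simp [h₁b, count_true_rep, count_true_blockWord (by omega : 0 < p)]
  have hhb : (g₂ true).count true = q := by
    simp [h₂b, count_true_rep, count_true_blockWord (by omega : 0 < q)]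
  constructor
  · intro hcomm
    obtain ⟨x, ⟨hg, hsx⟩, hh, htx⟩ := exists_eq_blockWord_of_commute hs ht h₁a (by omega) h₂a
      (by omega) (by rwa [hgb, hhb]) hcomm
    rw [hgb] at hg
    rw [hhb] at hh
    rcases Nat.eq_zero_or_pos x with rfl | hx
    · exact .inl ⟨⟨p, hg.trans (blockWord_const_zero (by omega))⟩,
        ⟨q, hh.trans (blockWord_const_zero (by omega))⟩⟩
    · obtain rfl : s = 1 := Nat.eq_of_mul_eq_mul_right hx (by omega)
      obtain rfl : t = 1 := Nat.eq_of_mul_eq_mul_right hx (by omega)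
      exact .inr ⟨h₁a, h₂a, x, hg, hh⟩
  · rintro (⟨⟨k, hk⟩, ⟨l, hl⟩⟩ | ⟨hga, hha, c, hg, hh⟩)
    · exact applyG_comp_comm_of_eq_wordPow (c := 0) h₁a h₂a
        ((applyG_singleton g₁ true).trans (hk.trans (wordPow_singleton true k).symm))
        ((applyG_singleton g₂ true).trans (hl.trans (wordPow_singleton true l).symm))
    · exact applyG_comp_comm_of_eq_wordPow h₁a h₂a
        (applyG_true_cons_rep_eq_wordPow (by omega) hga hg)
        (applyG_true_cons_rep_eq_wordPow (by omega) hha hh)
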